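/- Let ν be a probability measure on 𝕋 with a density (still denoted ν) with respect to λ that is a-Hölder with constant A, i.e. |ν(x)−ν(y)| ≤ A d(x,y)^a for all x,y, where a ∈ (0,1] and A > 0. Take p = 1, so the generator is L_{α,β}f(x) = ½ f''(x) + α^{−1} ∫_𝕋 [f(x + (αβ/2)·σ(x,y)) − f(x)] ν(dy). Then there exists a constant C > 0, depending only on A, such that for every β ≥ 1 and every α ∈ (0, π β^{−2}) there exists a bounded measurable function h : 𝕋 → ℝ with ∫_𝕋 L_{α,β}φ dμ_β = ∫_𝕋 φ·h dμ_β for all φ ∈ C²(𝕋), and with ess sup_x |h(x)| ≤ C·max(αβ⁴, α^a β^{1+a}). -/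

import Mathlib

open MeasureTheory Real Set Filter

noncomputable section

instance : Fact (0 < 2 * π) := ⟨Real.two_pi_pos⟩

/-- The circle `𝕋 = ℝ/(2πℤ)`. -/
abbrev 𝕋 : Type := AddCircle (2 * π)

/-- The normalized Haar probability measure `λ` on the circle. -/
def lam : Measure 𝕋 := (ENNReal.ofReal (2 * π))⁻¹ • volume

/-- The representative of a point of the circle in `(-π, π]`. -/
def rep (z : 𝕋) : ℝ := ((AddCircle.equivIoc (2 * π) (-π) z : Set.Ioc (-π) (-π + 2 * π)) : ℝ)

/-- `σ(x,y) = +1` if the representative of `y - x` lies in `[0, π]`, `-1` otherwise. -/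
def sgn (x y : 𝕋) : ℝ := if 0 ≤ rep (y - x) then 1 else -1

/-- The potential `U₁(x) = ∫ d(x,y) ν(dy)`. -/
def U1 (ν : Measure 𝕋) (x : 𝕋) : ℝ := ∫ y, dist x y ∂ν

/-- The normalizing constant `Z_β = ∫ exp(-β U₁) dλ`. -/
def Z1 (ν : Measure 𝕋) (β : ℝ) : ℝ := ∫ x, Real.exp (-β * U1 ν x) ∂lam

/-- The Gibbs measure `μ_β` with density `exp(-β U₁)/Z_β` w.r.t. `λ`. -/
def gibbs1 (ν : Measure 𝕋) (β : ℝ) : Measure 𝕋 :=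
  lam.withDensity fun x => ENNReal.ofReal (Real.exp (-β * U1 ν x) / Z1 ν β)

/-- The generator for `p = 1`, acting on (the periodic lift) `φ` of a `C²` function on `𝕋`:
`L_{α,β}φ(x) = ½ φ''(x) + α⁻¹ ∫ [φ(x + (αβ/2)σ(x,y)) - φ(x)] ν(dy)`. -/
def gen1 (ν : Measure 𝕋) (α β : ℝ) (φ : ℝ → ℝ) (z : 𝕋) : ℝ :=
  (1 / 2) * deriv (deriv φ) (rep z)
    + α⁻¹ * ∫ y, (φ (rep z + α * β / 2 * sgn z y) - φ (rep z)) ∂ν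

/-!
Let `V` be the lift of `U₁` to the real line. Since `V' = -∫ σ(·, y) ν(dy)`, the process jumps by
`±αβ/2` with probabilities `(1 ∓ V')/2`, so the generator is expressed through `V` alone, and its
adjoint in `L²(μ_β)` applied to `𝟙` is the Lebesgue adjoint applied to `exp (-βV)`, divided by
`exp (-βV)`. In this function the terms of order `α⁻¹` and `1` cancel. What remains are Taylor
remainders, controlled by `|V'| ≤ 1` and by the bound and the Hölder continuity of
`V''(t) = π⁻¹ (g(t) - g(t + π))`, where `g` is the density of `ν`.
-/

section Calculus

lemma continuous_of_abs_sub_le_mul_dist_rpow {X : Type*} [PseudoMetricSpace X] {f : X → ℝ}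
    {A a : ℝ} (ha : 0 < a) (hf : ∀ x y, |f x - f y| ≤ A * dist x y ^ a) : Continuous f := by
  refine continuous_iff_continuousAt.2 fun x => tendsto_iff_dist_tendsto_zero.2 ?_
  have hmodulus : Continuous fun y => A * dist y x ^ a :=
    continuous_const.mul ((continuous_id.dist continuous_const).rpow_const fun _ => .inr ha.le)
  refine squeeze_zero (fun _ => dist_nonneg) (fun y => hf y x) ?_
  simpa [zero_rpow ha.ne'] using hmodulus.tendsto x

lemma abs_exp_sub_one_sub_id_le_sq_mul_exp_abs (x : ℝ) :
    |exp x - 1 - x| ≤ x ^ 2 * exp |x| := by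
  have h := Complex.norm_exp_sub_sum_le_norm_mul_exp (x : ℂ) 2
  rw [show Complex.exp x - ∑ m ∈ Finset.range 2, (x : ℂ) ^ m / m.factorial
      = ((exp x - 1 - x : ℝ) : ℂ) by
    simp only [Finset.sum_range_succ, Finset.sum_range_zero, pow_zero, pow_one,
      Nat.factorial_zero, Nat.factorial_one]
    push_cast
    ring] at h
  simpa only [Complex.norm_real, Real.norm_eq_abs, sq_abs] using h

lemma abs_add_sub_sub_mul_le {f f' : ℝ → ℝ} (hf : ∀ y, HasDerivAt f (f' y) y) {c C x δ : ℝ}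
    (hC : ∀ y, |y - x| ≤ |δ| → |f' y - c| ≤ C) : |f (x + δ) - f x - c * δ| ≤ C * |δ| := by
  have hderiv (y : ℝ) : HasDerivAt (fun y => f y - c * y) (f' y - c) y :=
    ((hf y).fun_sub ((hasDerivAt_id' y).const_mul c)).congr_deriv (by ring)
  have h := (convex_closedBall x |δ|).norm_image_sub_le_of_norm_hasDerivWithin_le
    (fun y _ => (hderiv y).hasDerivWithinAt) (fun y hy => hC y (Metric.mem_closedBall.1 hy))
    (Metric.mem_closedBall_self (abs_nonneg δ)) (y := x + δ) (by simp)
  rw [add_sub_cancel_left] at h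
  exact (congrArg abs (by ring)).trans_le h

lemma abs_add_sub_le {f f' : ℝ → ℝ} (hf : ∀ y, HasDerivAt f (f' y) y) {C : ℝ}
    (hC : ∀ y, |f' y| ≤ C) (x δ : ℝ) : |f (x + δ) - f x| ≤ C * |δ| := by
  simpa using abs_add_sub_sub_mul_le hf (c := 0) (x := x) (δ := δ) fun y _ => by simpa using hC y

lemma periodic_deriv {f : ℝ → ℝ} {T : ℝ} (hf : Function.Periodic f T) :
    Function.Periodic (deriv f) T := fun x => by
  rw [← deriv_comp_add_const, funext hf]

lemma hasDerivAt_integral_comp_add {f : ℝ → ℝ} (hf : Continuous f) (a b t : ℝ) :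
    HasDerivAt (fun t => ∫ s in a..b, f (t + s)) (f (t + b) - f (t + a)) t := by
  have hprim (c : ℝ) : HasDerivAt (fun t => ∫ s in (0 : ℝ)..t + c, f s) (f (t + c)) t :=
    (hf.integral_hasStrictDerivAt 0 (t + c)).hasDerivAt.comp_add_const t c
  refine ((hprim b).fun_sub (hprim a)).congr_of_eventuallyEq (.of_forall fun t => ?_)
  simp only [intervalIntegral.integral_comp_add_left f t]
  exact (intervalIntegral.integral_interval_sub_left (hf.intervalIntegrable _ _)
    (hf.intervalIntegrable _ _)).symm

lemma hasDerivAt_integral_comp_add_mul_id {f : ℝ → ℝ} (hf : Continuous f) (a b t : ℝ) :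
    HasDerivAt (fun t => ∫ s in a..b, f (t + s) * s)
      (f (t + b) * b - f (t + a) * a - ∫ s in a..b, f (t + s)) t := by
  have hF : Continuous fun s => f s * s := by fun_prop
  have h := (hasDerivAt_integral_comp_add hF a b t).sub
    ((hasDerivAt_id t).mul (hasDerivAt_integral_comp_add hf a b t))
  refine (h.congr_deriv ?_).congr_of_eventuallyEq (.of_forall fun t => ?_)
  · simp only [id_eq]
    ring
  · have h₁ : Continuous fun s => f (t + s) * (t + s) := by fun_prop
    have h₂ : Continuous fun s => t * f (t + s) := by fun_prop
    simp only [Pi.sub_apply, Pi.mul_apply, id_eq]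
    rw [← intervalIntegral.integral_const_mul, ← intervalIntegral.integral_sub
      (h₁.intervalIntegrable _ _) (h₂.intervalIntegrable _ _)]
    congr 1 with s
    ring

end Calculus

section Periodic

variable {f g : ℝ → ℝ} {T : ℝ}

lemma integral_comp_add_right_of_periodic (hf : Function.Periodic f T) (a c : ℝ) :
    ∫ x in a..a + T, f (x + c) = ∫ x in a..a + T, f x := by
  rw [intervalIntegral.integral_comp_add_right, add_right_comm]
  exact hf.intervalIntegral_add_eq (a + c) a

lemma integral_mul_comp_add_of_periodic (hf : Function.Periodic f T) (hg : Function.Periodic g T)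
    (a c : ℝ) : ∫ x in a..a + T, f x * g (x + c) = ∫ x in a..a + T, f (x - c) * g x := by
  simpa only [Pi.mul_apply, add_sub_cancel_right] using
    integral_comp_add_right_of_periodic ((hf.sub_const c).mul hg) a c

lemma integral_mul_deriv_of_periodic (hf : ContDiff ℝ 1 f) (hg : ContDiff ℝ 1 g)
    (hfT : Function.Periodic f T) (hgT : Function.Periodic g T) (a : ℝ) :
    ∫ x in a..a + T, f x * deriv g x = -∫ x in a..a + T, deriv f x * g x := by
  rw [intervalIntegral.integral_mul_deriv_eq_deriv_mul
    (fun x _ => (hf.differentiable one_ne_zero x).hasDerivAt)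
    (fun x _ => (hg.differentiable one_ne_zero x).hasDerivAt)
    (hf.continuous_deriv_one.intervalIntegrable _ _)
    (hg.continuous_deriv_one.intervalIntegrable _ _), hfT a, hgT a]
  ring

lemma integral_mul_deriv_deriv_of_periodic (hf : ContDiff ℝ 2 f) (hg : ContDiff ℝ 2 g)
    (hfT : Function.Periodic f T) (hgT : Function.Periodic g T) (a : ℝ) :
    ∫ x in a..a + T, f x * deriv (deriv g) x = ∫ x in a..a + T, deriv (deriv f) x * g x := by
  have hf' : ContDiff ℝ 1 (deriv f) := hf.deriv'
  have hg' : ContDiff ℝ 1 (deriv g) := hg.deriv'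
  rw [integral_mul_deriv_of_periodic (hf.of_le one_le_two) hg' hfT (periodic_deriv hgT),
    integral_mul_deriv_of_periodic hf' (hg.of_le one_le_two) (periodic_deriv hfT) hgT, neg_neg]

lemma integral_mul_jumpDiffusion_of_periodic {ρ φ p q : ℝ → ℝ} (hρ : ContDiff ℝ 2 ρ)
    (hφ : ContDiff ℝ 2 φ) (hp : Continuous p) (hq : Continuous q) (hρT : Function.Periodic ρ T)
    (hφT : Function.Periodic φ T) (hpT : Function.Periodic p T) (hqT : Function.Periodic q T)
    (a c δ : ℝ) :
    ∫ x in a..a + T, ρ x * (1 / 2 * deriv (deriv φ) x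
        + c * (p x * φ (x + δ) + q x * φ (x - δ) - φ x))
      = ∫ x in a..a + T, φ x * (1 / 2 * deriv (deriv ρ) x
        + c * (p (x - δ) * ρ (x - δ) + q (x + δ) * ρ (x + δ) - ρ x)) := by
  have hρc := hρ.continuous
  have hφc := hφ.continuous
  have integral_linear {k₁ k₂ k₃ k₄ : ℝ → ℝ} (h₁ : Continuous k₁) (h₂ : Continuous k₂)
      (h₃ : Continuous k₃) (h₄ : Continuous k₄) :
      ∫ x in a..a + T, (1 / 2 * k₁ x + c * (k₂ x + k₃ x - k₄ x))
        = 1 / 2 * (∫ x in a..a + T, k₁ x) + c * ((∫ x in a..a + T, k₂ x)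
          + (∫ x in a..a + T, k₃ x) - ∫ x in a..a + T, k₄ x) := by
    have hint {k : ℝ → ℝ} (hk : Continuous k) : IntervalIntegrable k volume a (a + T) :=
      hk.intervalIntegrable _ _
    rw [intervalIntegral.integral_add (hint (by fun_prop)) (hint (by fun_prop)),
      intervalIntegral.integral_const_mul, intervalIntegral.integral_const_mul,
      intervalIntegral.integral_sub (hint (by fun_prop)) (hint h₄),
      intervalIntegral.integral_add (hint h₂) (hint h₃)]
  have hforward := integral_mul_comp_add_of_periodic (hpT.mul hρT) hφT a δ
  have hbackward := integral_mul_comp_add_of_periodic (hqT.mul hρT) hφT a (-δ)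
  simp only [Pi.mul_apply, sub_neg_eq_add, ← sub_eq_add_neg] at hforward hbackward
  calc
    _ = ∫ x in a..a + T, (1 / 2 * (ρ x * deriv (deriv φ) x)
          + c * (p x * ρ x * φ (x + δ) + q x * ρ x * φ (x - δ) - ρ x * φ x)) := by
      congr 1 with x
      ring
    _ = ∫ x in a..a + T, (1 / 2 * (deriv (deriv ρ) x * φ x)
          + c * (p (x - δ) * ρ (x - δ) * φ x + q (x + δ) * ρ (x + δ) * φ x - ρ x * φ x)) := by
      rw [integral_linear (by fun_prop) (by fun_prop) (by fun_prop) (by fun_prop),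
        integral_linear (by fun_prop) (by fun_prop) (by fun_prop) (by fun_prop),
        integral_mul_deriv_deriv_of_periodic hρ hφ hρT hφT, hforward, hbackward]
    _ = _ := by
      congr 1 with x
      ring

end Periodic

section LineGenerator

/-- The lift to `ℝ` of the generator `L_{α,β}` attached to a potential `V`. In terms of `V` the
jump `+αβ/2` has probability `(1 - V')/2`, because `V'(x) = -∫ σ(x,y) ν(dy)` when `V` lifts `U₁`. -/
def lineGenerator (V : ℝ → ℝ) (α β : ℝ) (φ : ℝ → ℝ) (x : ℝ) : ℝ :=
  1 / 2 * deriv (deriv φ) x + α⁻¹ * ((1 - deriv V x) / 2 * φ (x + α * β / 2)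
    + (1 + deriv V x) / 2 * φ (x - α * β / 2) - φ x)

/-- The image of the constant `1` under the adjoint of `lineGenerator V α β` for the weight
`exp (-βV)`, that is, the Lebesgue adjoint applied to `exp (-βV)` and divided by `exp (-βV)`. -/
def lineAdjointOne (V : ℝ → ℝ) (α β x : ℝ) : ℝ :=
  1 / 2 * (β ^ 2 * deriv V x ^ 2 - β * deriv (deriv V) x)
    + α⁻¹ * ((1 - deriv V (x - α * β / 2)) / 2 * exp (β * (V x - V (x - α * β / 2)))
      + (1 + deriv V (x + α * β / 2)) / 2 * exp (β * (V x - V (x + α * β / 2))) - 1)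

variable {V : ℝ → ℝ}

lemma continuous_lineAdjointOne (hV : ContDiff ℝ 2 V) (α β : ℝ) :
    Continuous (lineAdjointOne V α β) := by
  have hVc := hV.continuous
  have hV' := hV.differentiable_deriv_two.continuous
  unfold lineAdjointOne
  fun_prop

lemma deriv_deriv_exp_const_mul (hV : ContDiff ℝ 2 V) (c x : ℝ) :
    deriv (deriv fun y => exp (c * V y)) x
      = (c ^ 2 * deriv V x ^ 2 + c * deriv (deriv V) x) * exp (c * V x) := by
  have hexp (y : ℝ) : HasDerivAt (fun y => exp (c * V y)) (exp (c * V y) * (c * deriv V y)) y :=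
    ((hV.differentiable two_ne_zero y).hasDerivAt.const_mul c).exp
  rw [funext fun y => (hexp y).deriv]
  have hV'' := (hV.differentiable_deriv_two x).hasDerivAt
  refine (((hexp x).mul (hV''.const_mul c)).congr_deriv ?_).deriv
  ring

lemma integral_exp_mul_lineGenerator {φ : ℝ → ℝ} {T : ℝ} (hV : ContDiff ℝ 2 V)
    (hφ : ContDiff ℝ 2 φ) (hVT : Function.Periodic V T) (hφT : Function.Periodic φ T)
    (a α β : ℝ) :
    ∫ x in a..a + T, exp (-β * V x) * lineGenerator V α β φ x
      = ∫ x in a..a + T, exp (-β * V x) * (φ x * lineAdjointOne V α β x) := by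
  have hV'T := periodic_deriv hVT
  have hV' := hV.differentiable_deriv_two.continuous
  unfold lineGenerator
  rw [integral_mul_jumpDiffusion_of_periodic (by fun_prop) hφ (by fun_prop) (by fun_prop)
    (fun x => by simp only [hVT x]) hφT (fun x => by simp only [hV'T x])
    (fun x => by simp only [hV'T x])]
  have exp_shift (x y : ℝ) : exp (-β * V y) = exp (-β * V x) * exp (β * (V x - V y)) := by
    rw [← exp_add]
    ring_nf
  congr 1 with x
  rw [deriv_deriv_exp_const_mul hV, exp_shift x (x - α * β / 2), exp_shift x (x + α * β / 2),
    lineAdjointOne]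
  ring

lemma abs_one_add_mul_exp_sub_le {u u' w E A ω β ε : ℝ} (hβ : 0 ≤ β) (hε : 0 ≤ ε) (hβε : β * ε ≤ 2)
    (hu : |u| ≤ 1) (hu' : |u'| ≤ 1) (hE : |E| ≤ β * ε) (hu'_fst : |u' - u| ≤ A * ε)
    (hu'_snd : |u' - u - ε * w| ≤ ω * ε) (hE_fst : |E + β * ε * u| ≤ β * (A * ε ^ 2)) :
    |(1 + u') * exp E - (1 + u + ε * w - (1 + u) * (β * ε * u))|
      ≤ ω * ε + 3 * A * (β * ε ^ 2) + 2 * exp 2 * (β * ε) ^ 2 := by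
  have hexp : |exp E - 1 - E| ≤ (β * ε) ^ 2 * exp 2 := by
    refine (abs_exp_sub_one_sub_id_le_sq_mul_exp_abs E).trans ?_
    rw [← sq_abs E]
    gcongr
    exact hE.trans hβε
  have hfactor : |1 + u'| ≤ 2 := by
    rw [abs_le] at *
    constructor <;> linarith
  have hcross : |(u' - u) * (β * ε * u)| ≤ A * ε * (β * ε * 1) := by
    rw [abs_mul, abs_mul (β * ε), abs_of_nonneg (mul_nonneg hβ hε)]
    gcongr
    exact (abs_nonneg _).trans hu'_fst
  have hexponent : |(1 + u') * ((exp E - 1 - E) + (E + β * ε * u))|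
      ≤ 2 * ((β * ε) ^ 2 * exp 2 + β * (A * ε ^ 2)) := by
    rw [abs_mul]
    gcongr
    exact (abs_add_le _ _).trans (add_le_add hexp hE_fst)
  calc
    _ = |(u' - u - ε * w) - (u' - u) * (β * ε * u)
          + (1 + u') * ((exp E - 1 - E) + (E + β * ε * u))| := by
      congr 1
      ring
    _ ≤ ω * ε + A * ε * (β * ε * 1) + 2 * ((β * ε) ^ 2 * exp 2 + β * (A * ε ^ 2)) :=
      (abs_add_le _ _).trans
        (add_le_add ((abs_sub _ _).trans (add_le_add hu'_snd hcross)) hexponent)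
    _ = _ := by ring

/-- The forward jump is `s = 1` and the backward jump is `s = -1`. -/
lemma abs_jumpWeight_mul_exp_sub_le (hV : ContDiff ℝ 2 V) {A ω β ε s x : ℝ} (hβ : 0 ≤ β)
    (hε : 0 ≤ ε) (hβε : β * ε ≤ 2) (hs : |s| = 1) (hV' : ∀ y, |deriv V y| ≤ 1)
    (hV'' : ∀ y, |deriv (deriv V) y| ≤ A)
    (hω : ∀ y, |y - x| ≤ ε → |deriv (deriv V) y - deriv (deriv V) x| ≤ ω) :
    |(1 + s * deriv V (x + s * ε)) * exp (β * (V x - V (x + s * ε)))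
        - (1 + s * deriv V x + ε * deriv (deriv V) x
          - (1 + s * deriv V x) * (β * ε * (s * deriv V x)))|
      ≤ ω * ε + 3 * A * (β * ε ^ 2) + 2 * exp 2 * (β * ε) ^ 2 := by
  have hs2 : s * s = 1 := by rw [← abs_mul_abs_self, hs, one_mul]
  have hsε : |s * ε| = ε := by rw [abs_mul, hs, one_mul, abs_of_nonneg hε]
  have abs_s_mul (r : ℝ) : |s * r| = |r| := by rw [abs_mul, hs, one_mul]
  have hdV (y : ℝ) := (hV.differentiable two_ne_zero y).hasDerivAt
  have hddV (y : ℝ) := (hV.differentiable_deriv_two y).hasDerivAt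
  have hV_lip := abs_add_sub_le hdV hV' x (s * ε)
  have hV'_lip (δ : ℝ) := abs_add_sub_le hddV hV'' x δ
  have hV_taylor : |V (x + s * ε) - V x - deriv V x * (s * ε)| ≤ A * ε * |s * ε| :=
    abs_add_sub_sub_mul_le hdV fun y hy => by
      have h := hV'_lip (y - x)
      rw [add_sub_cancel] at h
      rw [hsε] at hy
      exact h.trans (mul_le_mul_of_nonneg_left hy ((abs_nonneg _).trans (hV'' x)))
  have hV'_taylor := abs_add_sub_sub_mul_le hddV (δ := s * ε) fun y hy => hω y (hsε ▸ hy)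
  rw [hsε, one_mul] at hV_lip
  rw [hsε] at hV_taylor hV'_taylor
  refine abs_one_add_mul_exp_sub_le hβ hε hβε ?_ ?_ ?_ ?_ ?_ ?_
  · exact (abs_s_mul _).trans_le (hV' x)
  · exact (abs_s_mul _).trans_le (hV' _)
  · rw [abs_mul, abs_of_nonneg hβ, abs_sub_comm]
    gcongr
  · rw [← mul_sub, abs_s_mul]
    exact (hV'_lip (s * ε)).trans_eq (by rw [hsε])
  · refine (congrArg abs ?_).trans_le ((abs_s_mul _).trans_le hV'_taylor)
    linear_combination (ε * deriv (deriv V) x) * hs2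
  · calc
      _ = |β * (V (x + s * ε) - V x - deriv V x * (s * ε))| := by
        rw [← abs_neg]
        congr 1
        ring
      _ ≤ β * (A * ε ^ 2) := by
        rw [abs_mul, abs_of_nonneg hβ, sq, ← mul_assoc A]
        gcongr

/-- The terms of order `α⁻¹` and `1` cancel in `lineAdjointOne`, which leaves the second-order
remainders of the two jump weights. -/
lemma abs_lineAdjointOne_le (hV : ContDiff ℝ 2 V) {A ω α β x : ℝ} (hα : 0 < α) (hβ : 0 ≤ β)
    (hαβ : α * β ^ 2 ≤ 4) (hV' : ∀ y, |deriv V y| ≤ 1) (hV'' : ∀ y, |deriv (deriv V) y| ≤ A)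
    (hω : ∀ y, |y - x| ≤ α * β / 2 → |deriv (deriv V) y - deriv (deriv V) x| ≤ ω) :
    |lineAdjointOne V α β x|
      ≤ 1 / 2 * (β * ω) + 3 / 4 * A * (α * β ^ 3) + 1 / 2 * exp 2 * (α * β ^ 4) := by
  set ε := α * β / 2 with hε
  have hβε : β * ε ≤ 2 := by linarith [show β * ε = α * β ^ 2 / 2 by ring]
  have jump {s : ℝ} (hs : |s| = 1) := abs_jumpWeight_mul_exp_sub_le hV hβ (by positivity) hβε hs
    hV' hV'' hω
  have hforward := jump abs_one
  have hbackward := jump (s := -1) (by simp)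
  simp only [one_mul, neg_mul, ← sub_eq_add_neg] at hforward hbackward
  have hαε : α⁻¹ * ε = β / 2 := by
    rw [hε]
    field_simp
  calc
    |lineAdjointOne V α β x|
      = |α⁻¹ / 2 * ((1 + -deriv V (x - ε)) * exp (β * (V x - V (x - ε)))
            - (1 + -deriv V x + ε * deriv (deriv V) x - (1 + -deriv V x) * (β * ε * -deriv V x))
          + ((1 + deriv V (x + ε)) * exp (β * (V x - V (x + ε)))
            - (1 + deriv V x + ε * deriv (deriv V) x
              - (1 + deriv V x) * (β * ε * deriv V x))))| := by
        congr 1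
        rw [lineAdjointOne, ← hε]
        linear_combination (-(β * deriv V x ^ 2 - deriv (deriv V) x)) * hαε
    _ ≤ α⁻¹ / 2 * (2 * (ω * ε + 3 * A * (β * ε ^ 2) + 2 * exp 2 * (β * ε) ^ 2)) := by
        rw [abs_mul, abs_of_pos (by positivity), two_mul (_ + _ + _)]
        gcongr
        exact (abs_add_le _ _).trans (add_le_add hbackward hforward)
    _ = _ := by
        rw [hε]
        field_simp
        ring

lemma abs_lineAdjointOne_le_of_holder (hV : ContDiff ℝ 2 V) {A a α β : ℝ} (ha : 0 ≤ a)
    (hα : 0 < α) (hβ : 1 ≤ β) (hαβ : α * β ^ 2 ≤ 4) (hV' : ∀ y, |deriv V y| ≤ 1)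
    (hV'' : ∀ y, |deriv (deriv V) y| ≤ A)
    (hV''_holder : ∀ y z, |deriv (deriv V) y - deriv (deriv V) z| ≤ A * |y - z| ^ a) (x : ℝ) :
    |lineAdjointOne V α β x| ≤ (2 * A + exp 2) * max (α * β ^ 4) (α ^ a * β ^ (1 + a)) := by
  have hA : 0 ≤ A := (abs_nonneg _).trans (hV'' 0)
  have hβ0 : 0 < β := one_pos.trans_le hβ
  have hω (y : ℝ) (hy : |y - x| ≤ α * β / 2) :
      |deriv (deriv V) y - deriv (deriv V) x| ≤ A * (α * β) ^ a :=
    (hV''_holder y x).trans (by gcongr; linarith [mul_pos hα hβ0])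
  have hβω : β * (A * (α * β) ^ a) = A * (α ^ a * β ^ (1 + a)) := by
    rw [mul_rpow hα.le hβ0.le, rpow_add hβ0, rpow_one]
    ring
  set M := max (α * β ^ 4) (α ^ a * β ^ (1 + a))
  have hM : α * β ^ 4 ≤ M := le_max_left _ _
  have hM0 : 0 ≤ M := le_trans (by positivity) hM
  have hα3 : α * β ^ 3 ≤ M := le_trans (by gcongr; norm_num) hM
  calc
    |lineAdjointOne V α β x|
      ≤ 1 / 2 * (β * (A * (α * β) ^ a)) + 3 / 4 * A * (α * β ^ 3)
          + 1 / 2 * exp 2 * (α * β ^ 4) :=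
        abs_lineAdjointOne_le hV hα hβ0.le hαβ hV' hV'' hω
    _ ≤ 1 / 2 * (A * M) + 3 / 4 * A * M + 1 / 2 * exp 2 * M := by
        rw [hβω]
        gcongr
        exact le_max_right _ _
    _ ≤ (2 * A + exp 2) * M := by nlinarith [mul_nonneg hA hM0, mul_nonneg (exp_pos 2).le hM0]

end LineGenerator

section Circle

lemma rep_mem_Ioc (z : 𝕋) : rep z ∈ Ioc (-π) π := by
  obtain ⟨hlower, hupper⟩ := (AddCircle.equivIoc (2 * π) (-π) z).2
  exact ⟨hlower, hupper.trans_eq (by ring)⟩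

lemma coe_rep (z : 𝕋) : (rep z : 𝕋) = z := AddCircle.coe_equivIoc

lemma rep_coe {s : ℝ} (hs : s ∈ Ioc (-π) π) : rep s = s := by
  rw [rep, AddCircle.equivIoc_coe_of_mem]
  rwa [show -π + 2 * π = π by ring]

lemma measurable_rep : Measurable rep :=
  measurable_subtype_coe.comp (AddCircle.measurableEquivIoc (2 * π) (-π)).measurable

lemma dist_eq_abs_rep_sub (x y : 𝕋) : dist x y = |rep (y - x)| := by
  obtain ⟨hlower, hupper⟩ := rep_mem_Ioc (y - x)
  have hrep : |rep (y - x)| ≤ |2 * π| / 2 := by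
    rw [abs_of_pos two_pi_pos, abs_le]
    constructor <;> linarith
  rw [dist_comm, dist_eq_norm, ← (AddCircle.norm_coe_eq_abs_iff _ two_pi_pos.ne').2 hrep, coe_rep]

lemma dist_coe_le (x y : ℝ) : dist (x : 𝕋) y ≤ |x - y| := by
  rw [dist_eq_norm, ← AddCircle.coe_sub]
  exact QuotientAddGroup.norm_mk_le_norm

lemma coe_add_neg_pi (t : ℝ) : ((t + -π : ℝ) : 𝕋) = ↑(t + π) := by
  rw [← AddCircle.coe_add_period (2 * π) (t + -π)]
  congr 1
  ring

lemma measurable_sgn (x : 𝕋) : Measurable (sgn x) :=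
  Measurable.ite (measurableSet_le measurable_const
    (measurable_rep.comp (measurable_id.sub_const x))) measurable_const measurable_const

lemma abs_sgn (x y : 𝕋) : |sgn x y| = 1 := by
  unfold sgn
  split_ifs <;> simp

lemma integral_lam (f : 𝕋 → ℝ) : ∫ z, f z ∂lam = (2 * π)⁻¹ * ∫ s in -π..π, f s := by
  rw [lam, integral_smul_measure, ← AddCircle.intervalIntegral_preimage (2 * π) (-π) f,
    show -π + 2 * π = π by ring, ENNReal.toReal_inv, ENNReal.toReal_ofReal two_pi_pos.le,
    smul_eq_mul]

lemma integral_lam_mul_comp_rep (f : 𝕋 → ℝ) (F : ℝ → ℝ) :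
    ∫ z, f z * F (rep z) ∂lam = (2 * π)⁻¹ * ∫ s in -π..π, f s * F s := by
  rw [integral_lam]
  congr 1
  refine intervalIntegral.integral_congr_ae (ae_of_all _ fun s hs => ?_)
  rw [uIoc_of_le (by linarith [pi_pos])] at hs
  rw [rep_coe hs]

lemma integral_lam_add_right (f : 𝕋 → ℝ) (x : 𝕋) : ∫ z, f (z + x) ∂lam = ∫ z, f z ∂lam := by
  rw [lam, integral_smul_measure, integral_smul_measure, integral_add_right_eq_self f x]

variable {ν : Measure 𝕋} [IsProbabilityMeasure ν]

lemma integrable_sgn (x : 𝕋) : Integrable (sgn x) ν :=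
  .of_bound (measurable_sgn x).aestronglyMeasurable 1 (ae_of_all _ fun y => (abs_sgn x y).le)

lemma abs_integral_sgn_le_one (x : 𝕋) : |∫ y, sgn x y ∂ν| ≤ 1 := by
  have h := norm_integral_le_of_norm_le_const (μ := ν) (f := sgn x) (C := 1)
    (ae_of_all _ fun y => (abs_sgn x y).le)
  simpa using h

lemma integral_comp_sgn (F : ℝ → ℝ) (x : 𝕋) :
    ∫ y, F (sgn x y) ∂ν
      = (1 + ∫ y, sgn x y ∂ν) / 2 * F 1 + (1 - ∫ y, sgn x y ∂ν) / 2 * F (-1) := by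
  have interpolate (y : 𝕋) :
      F (sgn x y) = (F 1 + F (-1)) / 2 + (F 1 - F (-1)) / 2 * sgn x y := by
    unfold sgn
    split_ifs <;> ring
  simp_rw [interpolate]
  rw [integral_add (integrable_const _) ((integrable_sgn x).const_mul _), integral_const_mul]
  simp only [integral_const, probReal_univ, one_smul]
  ring

end Circle

section Gibbs

/-- The `2π`-periodic lift to `ℝ` of the potential `U₁`. -/
def liftU1 (ν : Measure 𝕋) (t : ℝ) : ℝ := U1 ν t

lemma periodic_liftU1 (ν : Measure 𝕋) : Function.Periodic (liftU1 ν) (2 * π) := fun t => by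
  rw [liftU1, AddCircle.coe_add_period, liftU1]

lemma measurable_U1 (ν : Measure 𝕋) [SFinite ν] : Measurable (U1 ν) :=
  (continuous_dist.stronglyMeasurable.integral_prod_right (ν := ν)).measurable

lemma integral_comp_rep_gibbs1 (ν : Measure 𝕋) [SFinite ν] (β : ℝ) (F : ℝ → ℝ) :
    ∫ z, F (rep z) ∂gibbs1 ν β
      = (2 * π)⁻¹ * ((Z1 ν β)⁻¹ * ∫ s in -π..π, exp (-β * liftU1 ν s) * F s) := by
  have hdensity : Measurable fun z => ENNReal.ofReal (exp (-β * U1 ν z) / Z1 ν β) :=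
    (((measurable_U1 ν).const_mul (-β)).exp.div_const _).ennreal_ofReal
  have hZ : 0 ≤ Z1 ν β := integral_nonneg fun _ => (exp_pos _).le
  rw [gibbs1, integral_withDensity_eq_integral_toReal_smul hdensity (by simp)]
  simp only [smul_eq_mul, ENNReal.toReal_ofReal (div_nonneg (exp_pos _).le hZ)]
  rw [integral_lam_mul_comp_rep, ← intervalIntegral.integral_const_mul (Z1 ν β)⁻¹]
  congr! 3
  rw [liftU1]
  ring

end Gibbs

/-- The measure `ν` on the circle has the continuous density `g` with respect to `lam`. -/
structure HasContinuousDensity (ν : Measure 𝕋) (g : 𝕋 → ℝ) : Prop where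
  continuous : Continuous g
  nonneg : ∀ x, 0 ≤ g x
  eq_withDensity : ν = lam.withDensity fun y => ENNReal.ofReal (g y)

namespace HasContinuousDensity

variable {ν : Measure 𝕋} {g : 𝕋 → ℝ}

lemma continuous_lift (h : HasContinuousDensity ν g) : Continuous fun t : ℝ => g t :=
  h.continuous.comp (AddCircle.continuous_mk' _)

lemma integral_comp_rep_sub (h : HasContinuousDensity ν g) (F : ℝ → ℝ) (t : ℝ) :
    ∫ y, F (rep (y - t)) ∂ν = (2 * π)⁻¹ * ∫ s in -π..π, g ↑(t + s) * F s := by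
  have hg := h.continuous.measurable
  rw [h.eq_withDensity, integral_withDensity_eq_integral_toReal_smul (by fun_prop) (by simp),
    ← integral_lam_add_right _ (t : 𝕋)]
  simp only [add_sub_cancel_right, ENNReal.toReal_ofReal (h.nonneg _), smul_eq_mul]
  rw [integral_lam_mul_comp_rep (fun z => g (z + t))]
  simp only [AddCircle.coe_add, add_comm]

lemma integral_ite_rep_sub (h : HasContinuousDensity ν g) {p q : ℝ → ℝ} (hp : Continuous p)
    (hq : Continuous q) (t : ℝ) :
    ∫ y, (if 0 ≤ rep (y - t) then p (rep (y - t)) else q (rep (y - t))) ∂ν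
      = (2 * π)⁻¹ * ((∫ s in 0..π, g ↑(t + s) * p s) + ∫ s in -π..0, g ↑(t + s) * q s) := by
  set F : ℝ → ℝ := fun s => if 0 ≤ s then p s else q s with hF
  have hg := h.continuous_lift
  have hneg : -π ≤ 0 := neg_nonpos.2 pi_nonneg
  have hright : EqOn (fun s : ℝ => g ↑(t + s) * p s) (fun s => g ↑(t + s) * F s) (Ioo 0 π) :=
    fun s hs => by simp only [hF, if_pos hs.1.le]
  have hleft : EqOn (fun s : ℝ => g ↑(t + s) * q s) (fun s => g ↑(t + s) * F s) (Ioo (-π) 0) :=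
    fun s hs => by simp only [hF, if_neg hs.2.not_ge]
  have hp_int : IntervalIntegrable (fun s : ℝ => g ↑(t + s) * p s) volume 0 π :=
    ((hg.comp (continuous_const_add t)).mul hp).intervalIntegrable _ _
  have hq_int : IntervalIntegrable (fun s : ℝ => g ↑(t + s) * q s) volume (-π) 0 :=
    ((hg.comp (continuous_const_add t)).mul hq).intervalIntegrable _ _
  rw [h.integral_comp_rep_sub F, ← intervalIntegral.integral_add_adjacent_intervals
      (hq_int.congr_uIoo (by rwa [uIoo_of_le hneg]))
      (hp_int.congr_uIoo (by rwa [uIoo_of_le pi_nonneg])),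
    intervalIntegral.integral_congr_Ioo_of_le hneg hleft,
    intervalIntegral.integral_congr_Ioo_of_le pi_nonneg hright, add_comm]

lemma integral_sgn (h : HasContinuousDensity ν g) (t : ℝ) :
    ∫ y, sgn t y ∂ν = (2 * π)⁻¹ * ((∫ s in 0..π, g ↑(t + s)) - ∫ s in -π..0, g ↑(t + s)) := by
  have hsplit := h.integral_ite_rep_sub (continuous_const (y := 1)) (continuous_const (y := -1)) t
  simp only [mul_one, mul_neg, intervalIntegral.integral_neg, ← sub_eq_add_neg] at hsplit
  exact hsplit

lemma liftU1_eq (h : HasContinuousDensity ν g) (t : ℝ) :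
    liftU1 ν t = (2 * π)⁻¹ * ((∫ s in 0..π, g ↑(t + s) * s) - ∫ s in -π..0, g ↑(t + s) * s) := by
  have hsplit := h.integral_ite_rep_sub continuous_id continuous_neg t
  simp only [id_eq, mul_neg, intervalIntegral.integral_neg, ← sub_eq_add_neg] at hsplit
  rw [← hsplit, liftU1, U1]
  congr 1 with y
  rw [dist_eq_abs_rep_sub]
  split_ifs with hy
  · exact abs_of_nonneg hy
  · exact abs_of_neg (not_le.1 hy)

lemma hasDerivAt_integral_sgn (h : HasContinuousDensity ν g) (t : ℝ) :
    HasDerivAt (fun t : ℝ => ∫ y, sgn t y ∂ν) (π⁻¹ * (g ↑(t + π) - g t)) t := by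
  rw [funext h.integral_sgn]
  have hright := hasDerivAt_integral_comp_add h.continuous_lift 0 π t
  have hleft := hasDerivAt_integral_comp_add h.continuous_lift (-π) 0 t
  refine ((hright.fun_sub hleft).const_mul (2 * π)⁻¹).congr_deriv ?_
  rw [coe_add_neg_pi, add_zero, mul_inv]
  ring

lemma hasDerivAt_liftU1 (h : HasContinuousDensity ν g) (t : ℝ) :
    HasDerivAt (liftU1 ν) (-∫ y, sgn t y ∂ν) t := by
  rw [funext h.liftU1_eq, h.integral_sgn]
  have hright := hasDerivAt_integral_comp_add_mul_id h.continuous_lift 0 π t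
  have hleft := hasDerivAt_integral_comp_add_mul_id h.continuous_lift (-π) 0 t
  refine ((hright.fun_sub hleft).const_mul (2 * π)⁻¹).congr_deriv ?_
  rw [coe_add_neg_pi]
  ring

lemma deriv_liftU1 (h : HasContinuousDensity ν g) (t : ℝ) :
    deriv (liftU1 ν) t = -∫ y, sgn t y ∂ν := (h.hasDerivAt_liftU1 t).deriv

lemma hasDerivAt_deriv_liftU1 (h : HasContinuousDensity ν g) (t : ℝ) :
    HasDerivAt (deriv (liftU1 ν)) (π⁻¹ * (g t - g ↑(t + π))) t := by
  rw [funext h.deriv_liftU1]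
  exact (h.hasDerivAt_integral_sgn t).fun_neg.congr_deriv (by ring)

lemma deriv_deriv_liftU1 (h : HasContinuousDensity ν g) (t : ℝ) :
    deriv (deriv (liftU1 ν)) t = π⁻¹ * (g t - g ↑(t + π)) := (h.hasDerivAt_deriv_liftU1 t).deriv

lemma contDiff_two_liftU1 (h : HasContinuousDensity ν g) : ContDiff ℝ 2 (liftU1 ν) := by
  have hderiv : ContDiff ℝ 1 (deriv (liftU1 ν)) := by
    refine contDiff_one_iff_deriv.2 ⟨fun t => (h.hasDerivAt_deriv_liftU1 t).differentiableAt, ?_⟩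
    rw [funext h.deriv_deriv_liftU1]
    have hg := h.continuous_lift
    exact continuous_const.mul (hg.sub (hg.comp (continuous_add_const π)))
  exact contDiff_succ_iff_deriv.2 ⟨fun t => (h.hasDerivAt_liftU1 t).differentiableAt,
    fun hω => absurd hω (by simp), hderiv⟩

lemma abs_deriv_deriv_liftU1_le (h : HasContinuousDensity ν g) {A a : ℝ} (hA : 0 ≤ A)
    (ha : 0 ≤ a) (ha1 : a ≤ 1) (hg : ∀ x y, |g x - g y| ≤ A * dist x y ^ a) (t : ℝ) :
    |deriv (deriv (liftU1 ν)) t| ≤ A := by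
  have hdist : dist (t : 𝕋) ↑(t + π) ≤ π :=
    (dist_coe_le _ _).trans_eq (by rw [sub_add_cancel_left, abs_neg, abs_of_pos pi_pos])
  have hpow : dist (t : 𝕋) ↑(t + π) ^ a ≤ π := calc
    _ ≤ π ^ a := rpow_le_rpow dist_nonneg hdist ha
    _ ≤ π := rpow_le_self_of_one_le (by linarith [pi_gt_three]) ha1
  rw [h.deriv_deriv_liftU1, abs_mul, abs_of_pos (inv_pos.2 pi_pos), inv_mul_le_iff₀ pi_pos,
    mul_comm π]
  exact (hg _ _).trans (mul_le_mul_of_nonneg_left hpow hA)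

lemma abs_deriv_deriv_liftU1_sub_le (h : HasContinuousDensity ν g) {A a : ℝ} (hA : 0 ≤ A)
    (ha : 0 ≤ a) (hg : ∀ x y, |g x - g y| ≤ A * dist x y ^ a) (s t : ℝ) :
    |deriv (deriv (liftU1 ν)) s - deriv (deriv (liftU1 ν)) t| ≤ A * |s - t| ^ a := by
  have hlift (x y : ℝ) : |g x - g y| ≤ A * |x - y| ^ a :=
    (hg x y).trans (by gcongr; exact dist_coe_le x y)
  have hantipodal := hlift (s + π) (t + π)
  rw [add_sub_add_right_eq_sub] at hantipodal
  have hbound : 0 ≤ A * |s - t| ^ a := by positivity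
  calc
    _ = π⁻¹ * |(g s - g t) - (g ↑(s + π) - g ↑(t + π))| := by
      rw [h.deriv_deriv_liftU1, h.deriv_deriv_liftU1, ← mul_sub, abs_mul,
        abs_of_pos (inv_pos.2 pi_pos)]
      congr 2
      ring
    _ ≤ π⁻¹ * (2 * (A * |s - t| ^ a)) := by
      gcongr
      exact (abs_sub _ _).trans (by linarith [hlift s t])
    _ ≤ A * |s - t| ^ a := by
      rw [inv_mul_le_iff₀ pi_pos]
      exact mul_le_mul_of_nonneg_right (by linarith [pi_gt_three]) hbound

variable [IsProbabilityMeasure ν]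

lemma gen1_eq_lineGenerator (h : HasContinuousDensity ν g) (α β : ℝ) (φ : ℝ → ℝ) (z : 𝕋) :
    gen1 ν α β φ z = lineGenerator (liftU1 ν) α β φ (rep z) := by
  rw [gen1, lineGenerator, integral_comp_sgn fun σ => φ (rep z + α * β / 2 * σ) - φ (rep z),
    h.deriv_liftU1, coe_rep, mul_neg_one, ← sub_eq_add_neg]
  ring_nf

lemma integral_gen1_gibbs1 (h : HasContinuousDensity ν g) {φ : ℝ → ℝ}
    (hφT : Function.Periodic φ (2 * π)) (hφ : ContDiff ℝ 2 φ) (α β : ℝ) :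
    ∫ z, gen1 ν α β φ z ∂gibbs1 ν β
      = ∫ z, φ (rep z) * lineAdjointOne (liftU1 ν) α β (rep z) ∂gibbs1 ν β := by
  have hperiod := integral_exp_mul_lineGenerator h.contDiff_two_liftU1 hφ (periodic_liftU1 ν) hφT
    (-π) α β
  rw [show -π + 2 * π = π by ring] at hperiod
  simp_rw [h.gen1_eq_lineGenerator]
  rw [integral_comp_rep_gibbs1, hperiod,
    ← integral_comp_rep_gibbs1 ν β fun s => φ s * lineAdjointOne (liftU1 ν) α β s]

lemma abs_lineAdjointOne_liftU1_le (h : HasContinuousDensity ν g) {A a α β : ℝ} (hA : 0 ≤ A)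
    (ha : 0 ≤ a) (ha1 : a ≤ 1) (hg : ∀ x y, |g x - g y| ≤ A * dist x y ^ a) (hα : 0 < α)
    (hβ : 1 ≤ β) (hαβ : α * β ^ 2 ≤ 4) (t : ℝ) :
    |lineAdjointOne (liftU1 ν) α β t|
      ≤ (2 * A + exp 2) * max (α * β ^ 4) (α ^ a * β ^ (1 + a)) :=
  abs_lineAdjointOne_le_of_holder h.contDiff_two_liftU1 ha hα hβ hαβ
    (fun s => by rw [h.deriv_liftU1, abs_neg]; exact abs_integral_sgn_le_one _)
    (h.abs_deriv_deriv_liftU1_le hA ha ha1 hg) (h.abs_deriv_deriv_liftU1_sub_le hA ha hg) t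

end HasContinuousDensity

/-- Proposition `mbl1`: for `p = 1` and a Hölder density, there is a constant
`C = C(A)` such that for `β ≥ 1` and `0 < α < πβ⁻²` the adjoint of `L_{α,β}` in `L²(μ_β)`
applied to `𝟙` (i.e. the function `h` representing `φ ↦ ∫ L_{α,β}φ dμ_β`) satisfies
`ess sup |h| ≤ C max(αβ⁴, α^a β^{1+a})`. -/
theorem adjoint_one_estimate_p_one (A : ℝ) (hA : 0 < A) :
    ∃ C : ℝ, 0 < C ∧
      ∀ (a : ℝ), 0 < a → a ≤ 1 →
      ∀ (g : 𝕋 → ℝ) (ν : Measure 𝕋), IsProbabilityMeasure ν →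
        ν = lam.withDensity (fun y => ENNReal.ofReal (g y)) →
        (∀ x, 0 ≤ g x) →
        (∀ x y : 𝕋, |g x - g y| ≤ A * dist x y ^ a) →
      ∀ (β α : ℝ), 1 ≤ β → 0 < α → α < π * β⁻¹ ^ 2 →
      ∃ h : 𝕋 → ℝ, Measurable h ∧
        (∀ᵐ x ∂lam, |h x| ≤ C * max (α * β ^ 4) (α ^ a * β ^ (1 + a))) ∧
        ∀ φ : ℝ → ℝ, Function.Periodic φ (2 * π) → ContDiff ℝ 2 φ →
          ∫ z, gen1 ν α β φ z ∂(gibbs1 ν β) = ∫ z, φ (rep z) * h z ∂(gibbs1 ν β) := by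
  refine ⟨2 * A + exp 2, by positivity, ?_⟩
  intro a ha ha1 g ν hν hνg hg0 hg β α hβ hα hαβ
  have hdensity : HasContinuousDensity ν g :=
    ⟨continuous_of_abs_sub_le_mul_dist_rpow ha hg, hg0, hνg⟩
  have hαβ4 : α * β ^ 2 ≤ 4 := by
    rw [inv_pow, ← div_eq_mul_inv, lt_div_iff₀ (by positivity)] at hαβ
    exact hαβ.le.trans pi_le_four
  refine ⟨fun z => lineAdjointOne (liftU1 ν) α β (rep z), ?_, ?_, ?_⟩
  · exact (continuous_lineAdjointOne hdensity.contDiff_two_liftU1 α β).measurable.comp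
      measurable_rep
  · exact ae_of_all _ fun z =>
      hdensity.abs_lineAdjointOne_liftU1_le hA.le ha.le ha1 hg hα hβ hαβ4 (rep z)
  · exact fun φ hφT hφ => hdensity.integral_gen1_gibbs1 hφT hφ α β
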